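/- arXiv:1404.3327 — 2 statements merged into one kernel-verified Lean document; each statement's English description precedes it below -/
import Mathlib

section
/- Let ι be a nonempty finite index type, A : Matrix ι ι ℝ an entrywise nonnegative matrix, and w : ι → ℝ with w i > 0 for all i and A.mulVec w = ρ(A) • w (w is a positive dominant eigenvector of A). Let s > ρ(A), let μ = max over k of (ρ(A) - A k k)/(s - A k k) and r = |1 - ω| + ω·μ, and suppose 0 < ω < 2/(1 + μ). If x̄ : ι → ℝ satisfies (s • 1 - A).mulVec x̄ = b, and x' is obtained from x : ι → ℝ by a step-asynchronous SOR update for the system (s • 1 - A) x = b with relaxation parameter ω, then ‖x̄ - x'‖_w ≤ r · ‖x̄ - x‖_w. -/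
open Finset

/-- Spectral radius of a real matrix: the maximum of the absolute values of
its complex eigenvalues. -/
noncomputable def specRad {ι : Type*} [Fintype ι] [DecidableEq ι] (A : Matrix ι ι ℝ) : ℝ :=
  sSup ((fun z : ℂ => ‖z‖) '' spectrum ℂ (A.map (algebraMap ℝ ℂ)))

/-- The `w`-norm of a vector `x`: the maximum over `i` of `|x i| / w i`. -/
noncomputable def wNorm {ι : Type*} [Fintype ι] [Nonempty ι] (w x : ι → ℝ) : ℝ :=
  Finset.univ.sup' Finset.univ_nonempty (fun i => |x i| / w i)

/-!
A coordinate update multiplies the error by `1 - ω` at `i` and mixes in the errors of the values it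
reads, with coefficients `-ω M i j / M i i`. If row `i` of `M` is diagonally dominant with respect
to the weights `w`, with ratio `μ`, then errors bounded by `C w` at the values read yield an error
of at most `(|1 - ω| + |ω| μ) C w i`. As long as this factor is at most `1`, values that have
already been updated again satisfy the bound `C w`, so the order of the updates is irrelevant. For
`M = s • 1 - A` with `A ≥ 0`, the inequality `A w ≤ R w` says exactly that the weighted off-diagonal
sum of row `i` is at most `(R - A i i) w i`, a fraction `(R - A i i) / (s - A i i)` of the weighted
diagonal entry.
-/

open Matrix

section WNorm

variable {ι : Type*} [Fintype ι] [Nonempty ι] {w x : ι → ℝ} {c : ℝ}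

theorem wNorm_le_iff (hw : ∀ i, 0 < w i) : wNorm w x ≤ c ↔ ∀ i, |x i| ≤ c * w i := by
  simp only [wNorm, sup'_le_iff, mem_univ, true_imp_iff, div_le_iff₀ (hw _)]

theorem abs_le_wNorm_mul (hw : ∀ i, 0 < w i) (i : ι) : |x i| ≤ wNorm w x * w i :=
  (wNorm_le_iff hw).1 le_rfl i

theorem wNorm_nonneg (hw : ∀ i, 0 ≤ w i) : 0 ≤ wNorm w x := by
  obtain ⟨i⟩ := ‹Nonempty ι›
  exact (div_nonneg (abs_nonneg _) (hw i)).trans (le_sup' (fun i => |x i| / w i) (mem_univ i))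

end WNorm

section OffDiagonal

variable {ι α : Type*} [DecidableEq ι]

section Shift

variable [Ring α] (s : α) (A : Matrix ι ι α)

theorem smul_one_sub_apply_self (i : ι) :
    (s • (1 : Matrix ι ι α) - A) i i = s - A i i := by
  simp

theorem smul_one_sub_apply_ne {i j : ι} (h : j ≠ i) :
    (s • (1 : Matrix ι ι α) - A) i j = -A i j := by
  simp [one_apply_ne h.symm]

end Shift

variable [Fintype ι] [NonUnitalNonAssocSemiring α]

theorem mulVec_apply_eq_add_sum_erase (M : Matrix ι ι α) (v : ι → α) (i : ι) :
    (M *ᵥ v) i = M i i * v i + ∑ j ∈ univ.erase i, M i j * v j :=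
  (add_sum_erase univ (fun j => M i j * v j) (mem_univ i)).symm

theorem sum_erase_mul_piecewise {S : Finset ι} {i : ι} (hi : i ∉ S) (a y x : ι → α) :
    ∑ j ∈ univ.erase i, a j * S.piecewise y x j =
      ∑ j ∈ S, a j * y j + ∑ j ∈ univ.filter (fun j => j ∉ S ∧ j ≠ i), a j * x j := by
  have hread : (univ.erase i).filter (· ∈ S) = S := by grind
  have hkeep : (univ.erase i).filter (· ∉ S) = univ.filter (fun j => j ∉ S ∧ j ≠ i) := by grind
  simp only [piecewise, mul_ite, sum_ite, hread, hkeep]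

end OffDiagonal

section Relaxation

variable {ι 𝕜 : Type*} [Fintype ι] [DecidableEq ι] [Field 𝕜]

/-- The relaxed value of coordinate `i` for the system `M x = b`: the `i`-th equation is solved for
its diagonal unknown, reading the other unknowns from `z`, and averaged with `x i` using the
relaxation parameter `ω`. Keeping `z` separate from `x` allows it to contain updated values. -/
def sorRelax (M : Matrix ι ι 𝕜) (b : ι → 𝕜) (ω : 𝕜) (x z : ι → 𝕜) (i : ι) : 𝕜 :=
  (1 - ω) * x i + ω / M i i * (b i - ∑ j ∈ univ.erase i, M i j * z j)

/-- `x'` is obtained from `x` by a step-asynchronous SOR update for `M x = b` with relaxation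
parameter `ω`: coordinate `i` reads the new values on `N i` and the old values elsewhere. The
requirement that `N` comes from an order of update is a separate hypothesis, namely well-foundedness
of `j ∈ N i`. -/
def IsStepAsyncSOR (M : Matrix ι ι 𝕜) (b : ι → 𝕜) (ω : 𝕜) (N : ι → Finset ι) (x x' : ι → 𝕜) :
    Prop :=
  ∀ i, x' i = sorRelax M b ω x ((N i).piecewise x' x) i

theorem sub_sorRelax {M : Matrix ι ι 𝕜} {b xbar : ι → 𝕜} {i : ι} (hM : M i i ≠ 0)
    (hxbar : (M *ᵥ xbar) i = b i) (ω : 𝕜) (x z : ι → 𝕜) :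
    xbar i - sorRelax M b ω x z i =
      (1 - ω) * (xbar i - x i) - ω / M i i * ∑ j ∈ univ.erase i, M i j * (xbar j - z j) := by
  rw [mulVec_apply_eq_add_sum_erase] at hxbar
  simp only [sorRelax, ← hxbar, mul_sub, sum_sub_distrib]
  field_simp
  ring

theorem isStepAsyncSOR_smul_one_sub_iff {A : Matrix ι ι 𝕜} {b x x' : ι → 𝕜} {s ω : 𝕜}
    {N : ι → Finset ι} (hN : ∀ i, i ∉ N i) :
    IsStepAsyncSOR (s • (1 : Matrix ι ι 𝕜) - A) b ω N x x' ↔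
      ∀ i, x' i = (1 - ω) * x i + (ω / (s - A i i)) *
        (b i + ∑ j ∈ N i, A i j * x' j
             + ∑ j ∈ univ.filter (fun j => j ∉ N i ∧ j ≠ i), A i j * x j) := by
  refine forall_congr' fun i => ?_
  have hsum (z : ι → 𝕜) : ∑ j ∈ univ.erase i, (s • (1 : Matrix ι ι 𝕜) - A) i j * z j =
      -∑ j ∈ univ.erase i, A i j * z j := by
    rw [← sum_neg_distrib]
    exact sum_congr rfl fun j hj => by rw [smul_one_sub_apply_ne s A (ne_of_mem_erase hj), neg_mul]
  rw [sorRelax, smul_one_sub_apply_self, hsum, sub_neg_eq_add, sum_erase_mul_piecewise (hN i),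
    add_assoc (b i)]

end Relaxation

section Supersolution

variable {ι α : Type*} [Fintype ι] [Ring α] [LinearOrder α] [IsStrictOrderedRing α]
  {A : Matrix ι ι α} {w : ι → α} {c : α}

theorem sum_erase_mul_le_of_mulVec_le [DecidableEq ι] (hAw : A *ᵥ w ≤ c • w) (i : ι) :
    ∑ j ∈ univ.erase i, A i j * w j ≤ (c - A i i) * w i := by
  rw [sub_mul, le_sub_iff_add_le', ← mulVec_apply_eq_add_sum_erase]
  exact hAw i

theorem diag_le_of_mulVec_le (hA : ∀ i j, j ≠ i → 0 ≤ A i j) (hw : ∀ i, 0 < w i)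
    (hAw : A *ᵥ w ≤ c • w) (i : ι) : A i i ≤ c := by
  classical
  have hsum : 0 ≤ ∑ j ∈ univ.erase i, A i j * w j :=
    sum_nonneg fun j hj => mul_nonneg (hA i j (ne_of_mem_erase hj)) (hw j).le
  exact sub_nonneg.1 <|
    nonneg_of_mul_nonneg_left (hsum.trans (sum_erase_mul_le_of_mulVec_le hAw i)) (hw i)

end Supersolution

theorem abs_one_sub_add_abs_mul_le_one {𝕜 : Type*} [Field 𝕜] [LinearOrder 𝕜] [IsStrictOrderedRing 𝕜]
    {ω μ : 𝕜} (hω0 : 0 < ω) (hω2 : ω ≤ 2 / (1 + μ)) (hμ : μ ≤ 1) : |1 - ω| + |ω| * μ ≤ 1 := by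
  have hμ' : 0 < 1 + μ := (div_pos_iff_of_pos_left two_pos).1 (hω0.trans_le hω2)
  have hω : ω * (1 + μ) ≤ 2 := (le_div_iff₀ hμ').1 hω2
  have hωμ : ω * μ ≤ ω := mul_le_of_le_one_right hω0.le hμ
  rw [abs_of_pos hω0, ← le_sub_iff_add_le, abs_le]
  constructor <;> linarith

section Dominance

variable {ι 𝕜 : Type*} [Fintype ι] [DecidableEq ι] [Field 𝕜] [LinearOrder 𝕜]

/-- Row diagonal dominance of `M` with respect to the weights `w`: in each row the weighted
off-diagonal sum is at most the fraction `μ` of the weighted diagonal entry, which is nonzero. -/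
structure WeightedDiagDominant (M : Matrix ι ι 𝕜) (w : ι → 𝕜) (μ : 𝕜) : Prop where
  diag_ne_zero : ∀ i, M i i ≠ 0
  sum_abs_le : ∀ i, ∑ j ∈ univ.erase i, |M i j| * w j ≤ μ * (|M i i| * w i)

variable [IsStrictOrderedRing 𝕜]

namespace WeightedDiagDominant

variable {M : Matrix ι ι 𝕜} {b w x x' xbar : ι → 𝕜} {μ ω C : 𝕜}

theorem abs_sub_sorRelax_le (hM : WeightedDiagDominant M w μ) (hxbar : M *ᵥ xbar = b) (hC : 0 ≤ C)
    {z : ι → 𝕜} {i : ι} (hx : |xbar i - x i| ≤ C * w i)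
    (hz : ∀ j, j ≠ i → |xbar j - z j| ≤ C * w j) :
    |xbar i - sorRelax M b ω x z i| ≤ (|1 - ω| + |ω| * μ) * (C * w i) := by
  have hsum : |∑ j ∈ univ.erase i, M i j * (xbar j - z j)| ≤ C * (μ * (|M i i| * w i)) :=
    calc |∑ j ∈ univ.erase i, M i j * (xbar j - z j)|
        ≤ ∑ j ∈ univ.erase i, |M i j| * (C * w j) := by
          refine (abs_sum_le_sum_abs _ _).trans (sum_le_sum fun j hj => ?_)
          rw [abs_mul]
          exact mul_le_mul_of_nonneg_left (hz j (ne_of_mem_erase hj)) (abs_nonneg _)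
      _ = C * ∑ j ∈ univ.erase i, |M i j| * w j := by
          simp only [mul_sum, mul_left_comm]
      _ ≤ C * (μ * (|M i i| * w i)) := mul_le_mul_of_nonneg_left (hM.sum_abs_le i) hC
  have hdiag : |M i i| ≠ 0 := abs_ne_zero.2 (hM.diag_ne_zero i)
  calc |xbar i - sorRelax M b ω x z i|
      ≤ |1 - ω| * |xbar i - x i|
          + |ω| / |M i i| * |∑ j ∈ univ.erase i, M i j * (xbar j - z j)| := by
        rw [sub_sorRelax (hM.diag_ne_zero i) (congrFun hxbar i), ← abs_mul, ← abs_div, ← abs_mul]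
        exact abs_sub _ _
    _ ≤ |1 - ω| * (C * w i) + |ω| / |M i i| * (C * (μ * (|M i i| * w i))) := by gcongr
    _ = (|1 - ω| + |ω| * μ) * (C * w i) := by field_simp

theorem abs_sub_stepAsyncSOR_le (hM : WeightedDiagDominant M w μ) (hxbar : M *ᵥ xbar = b)
    (hr : |1 - ω| + |ω| * μ ≤ 1) {N : ι → Finset ι} (hN : WellFounded fun j i => j ∈ N i)
    (hupd : IsStepAsyncSOR M b ω N x x') (hC : 0 ≤ C) (hx : ∀ i, |xbar i - x i| ≤ C * w i)
    (i : ι) : |xbar i - x' i| ≤ (|1 - ω| + |ω| * μ) * (C * w i) := by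
  induction i using hN.induction with
  | _ i ih =>
    have hread (j : ι) : |xbar j - (N i).piecewise x' x j| ≤ C * w j := by
      by_cases hj : j ∈ N i
      · rw [piecewise_eq_of_mem _ _ _ hj]
        exact (ih j hj).trans (mul_le_of_le_one_left ((abs_nonneg _).trans (hx j)) hr)
      · rw [piecewise_eq_of_notMem _ _ _ hj]
        exact hx j
    rw [hupd i]
    exact hM.abs_sub_sorRelax_le hxbar hC (hx i) fun j _ => hread j

end WeightedDiagDominant

theorem weightedDiagDominant_smul_one_sub {A : Matrix ι ι 𝕜} {w : ι → 𝕜} {R s μ : 𝕜}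
    (hA : ∀ i j, j ≠ i → 0 ≤ A i j) (hw : ∀ i, 0 < w i) (hAw : A *ᵥ w ≤ R • w)
    (hs : R < s) (hμ : ∀ k, (R - A k k) / (s - A k k) ≤ μ) :
    WeightedDiagDominant (s • (1 : Matrix ι ι 𝕜) - A) w μ := by
  have hpos (i : ι) : 0 < s - A i i := sub_pos.2 ((diag_le_of_mulVec_le hA hw hAw i).trans_lt hs)
  refine ⟨fun i => by simpa only [smul_one_sub_apply_self] using (hpos i).ne', fun i => ?_⟩
  calc ∑ j ∈ univ.erase i, |(s • (1 : Matrix ι ι 𝕜) - A) i j| * w j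
      = ∑ j ∈ univ.erase i, A i j * w j := sum_congr rfl fun j hj => by
        have hji := ne_of_mem_erase hj
        rw [smul_one_sub_apply_ne s A hji, abs_neg, abs_of_nonneg (hA i j hji)]
    _ ≤ (R - A i i) * w i := sum_erase_mul_le_of_mulVec_le hAw i
    _ ≤ μ * (s - A i i) * w i :=
        mul_le_mul_of_nonneg_right ((div_le_iff₀ (hpos i)).1 (hμ i)) (hw i).le
    _ = μ * (|(s • (1 : Matrix ι ι 𝕜) - A) i i| * w i) := by
        rw [smul_one_sub_apply_self, abs_of_pos (hpos i), mul_assoc]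

end Dominance

theorem stepAsyncSOR_error_contraction_dominant_eigenvector_general
    {ι : Type*} [Fintype ι] [Nonempty ι] [DecidableEq ι]
    {M : Matrix ι ι ℝ} {w b xbar x x' : ι → ℝ} {μ ω : ℝ} {N : ι → Finset ι}
    (hw : ∀ i, 0 < w i) (hM : WeightedDiagDominant M w μ) (hxbar : M *ᵥ xbar = b)
    (hr : |1 - ω| + |ω| * μ ≤ 1) (hN : WellFounded fun j i => j ∈ N i)
    (hupd : IsStepAsyncSOR M b ω N x x') :
    wNorm w (xbar - x') ≤ (|1 - ω| + |ω| * μ) * wNorm w (xbar - x) := by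
  refine (wNorm_le_iff hw).2 fun i => ?_
  rw [mul_assoc]
  exact hM.abs_sub_stepAsyncSOR_le hxbar hr hN hupd
    (wNorm_nonneg fun i => (hw i).le) (abs_le_wNorm_mul hw) i

theorem stepAsyncSOR_error_contraction_dominant_eigenvector
    {ι : Type*} [Fintype ι] [Nonempty ι] [DecidableEq ι]
    (A : Matrix ι ι ℝ) (s ω : ℝ) (w b xbar x x' : ι → ℝ)
    (hA : ∀ i j, 0 ≤ A i j)
    (hw : ∀ i, 0 < w i)
    (heig : A.mulVec w = specRad A • w)
    (hs : specRad A < s)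
    (μ r : ℝ)
    (hμ : μ = Finset.univ.sup' Finset.univ_nonempty
      (fun k => (specRad A - A k k) / (s - A k k)))
    (hr : r = |1 - ω| + ω * μ)
    (hω0 : 0 < ω) (hω2 : ω < 2 / (1 + μ))
    (hxbar : (s • (1 : Matrix ι ι ℝ) - A).mulVec xbar = b)
    (N : ι → Finset ι) (rnk : ι → ℕ)
    (hrank : ∀ i j, j ∈ N i → rnk j < rnk i)
    (hupd : ∀ i, x' i = (1 - ω) * x i + (ω / (s - A i i)) *
      (b i + ∑ j ∈ N i, A i j * x' j
           + ∑ j ∈ Finset.univ.filter (fun j => j ∉ N i ∧ j ≠ i), A i j * x j)) :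
    wNorm w (xbar - x') ≤ r * wNorm w (xbar - x) := by
  have hA' (i j : ι) (_ : j ≠ i) : 0 ≤ A i j := hA i j
  have hμle (k : ι) : (specRad A - A k k) / (s - A k k) ≤ μ :=
    hμ ▸ le_sup' (fun k => (specRad A - A k k) / (s - A k k)) (mem_univ k)
  have hμ1 : μ ≤ 1 := hμ.trans_le <| sup'_le _ _ fun k _ =>
    div_le_one_of_le₀ (sub_le_sub_right hs.le _) <|
      sub_nonneg.2 ((diag_le_of_mulVec_le hA' hw heig.le k).trans hs.le)
  have hM := weightedDiagDominant_smul_one_sub hA' hw heig.le hs hμle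
  have hr1 := abs_one_sub_add_abs_mul_le_one hω0 hω2.le hμ1
  have hN : WellFounded fun j i => j ∈ N i := Subrelation.wf (hrank _ _) (measure rnk).wf
  have hstep := (isStepAsyncSOR_smul_one_sub_iff fun i hi => (hrank i i hi).ne rfl).2 hupd
  simpa only [hr, abs_of_pos hω0] using
    stepAsyncSOR_error_contraction_dominant_eigenvector_general hw hM hxbar hr1 hN hstep
end

section
/- Let ι be a nonempty finite index type, A : Matrix ι ι ℝ an entrywise nonnegative matrix, β : ℝ, and x : ι → ℝ with x i ≥ 0 for all i, x ≠ 0, and β * x i ≤ (A.mulVec x) i for all i. Then β ≤ ρ(A). -/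
/-! Iterating `β x ≤ A x` with the monotone map `A` gives `β ^ k x ≤ A ^ k x`. Reading this off at a
coordinate where `x` is positive bounds `‖A ^ k‖` below by a constant multiple of `β ^ k`, and the
constant disappears when taking `k`-th roots in Gelfand's formula for the spectral radius. -/

open Filter Topology
open scoped ENNReal Matrix

lemma mulVec_monotone_of_nonneg {m n R : Type*} [Fintype n] [Semiring R] [PartialOrder R]
    [IsOrderedRing R] {A : Matrix m n R} (hA : ∀ i j, 0 ≤ A i j) :
    Monotone (A *ᵥ ·) :=
  fun _ _ huv i => dotProduct_le_dotProduct_of_nonneg_left huv (hA i)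

lemma pow_smul_le_pow_apply_of_smul_le {R M : Type*} [Semiring R] [Preorder R]
    [AddCommMonoid M] [Preorder M] [Module R M] [PosSMulMono R M]
    {f : Module.End R M} (hf : Monotone f) {r : R} (hr : 0 ≤ r) {x : M}
    (h : r • x ≤ f x) (k : ℕ) :
    r ^ k • x ≤ (f ^ k) x := by
  have hcomm : Function.Commute (r • · : M → M) f := fun y => (f.map_smul r y).symm
  simpa only [smul_iterate, Module.End.coe_pow] using
    hcomm.iterate_le_of_map_le (monotone_smul_left_of_nonneg hr) hf h k

lemma pow_smul_le_pow_mulVec_of_smul_le {n R : Type*} [Fintype n] [DecidableEq n]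
    [CommSemiring R] [PartialOrder R] [IsOrderedRing R] {A : Matrix n n R}
    (hA : ∀ i j, 0 ≤ A i j) {r : R} (hr : 0 ≤ r) {x : n → R} (h : r • x ≤ A *ᵥ x) (k : ℕ) :
    r ^ k • x ≤ A ^ k *ᵥ x := by
  simpa only [← Matrix.toLin'_pow, Matrix.toLin'_apply] using
    pow_smul_le_pow_apply_of_smul_le (f := Matrix.toLin' A) (mulVec_monotone_of_nonneg hA) hr h k

lemma spectralRadius_ne_top {𝕜 𝔸 : Type*} [NormedField 𝕜] [NormedRing 𝔸] [NormedAlgebra 𝕜 𝔸]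
    [CompleteSpace 𝔸] (a : 𝔸) :
    spectralRadius 𝕜 a ≠ ∞ := by
  refine ne_top_of_le_ne_top ?_ (spectrum.spectralRadius_le_pow_nnnorm_pow_one_div 𝕜 a 0)
  finiteness

lemma ofReal_le_spectralRadius_of_mul_pow_le_norm_pow {𝔸 : Type*} [NormedRing 𝔸]
    [NormedAlgebra ℂ 𝔸] [CompleteSpace 𝔸] {a : 𝔸} {c r : ℝ} (hc : 0 < c) (hr : 0 ≤ r)
    (h : ∃ᶠ k : ℕ in atTop, c * r ^ k ≤ ‖a ^ k‖) :
    ENNReal.ofReal r ≤ spectralRadius ℂ a := by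
  have hroot : Tendsto (fun k : ℕ => c ^ (1 / k : ℝ) * r) atTop (𝓝 r) := by
    simpa only [Real.rpow_zero, one_mul] using
      (tendsto_const_nhds.rpow tendsto_one_div_atTop_nhds_zero_nat (Or.inl hc.ne')).mul_const r
  refine le_of_tendsto_of_tendsto_of_frequently (ENNReal.tendsto_ofReal hroot)
    (spectrum.pow_norm_pow_one_div_tendsto_nhds_spectralRadius a) ?_
  refine (h.and_eventually (eventually_ne_atTop 0)).mono fun k ⟨hk, hk0⟩ => ?_
  refine ENNReal.ofReal_le_ofReal ?_
  calc c ^ (1 / k : ℝ) * r = (c * r ^ k) ^ (1 / k : ℝ) := by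
        rw [Real.mul_rpow hc.le (pow_nonneg hr k), one_div, Real.pow_rpow_inv_natCast hr hk0]
    _ ≤ ‖a ^ k‖ ^ (1 / k : ℝ) := by gcongr

lemma specRad_eq_toReal_spectralRadius {ι : Type*} [Fintype ι] [DecidableEq ι]
    (A : Matrix ι ι ℝ) :
    specRad A = (spectralRadius ℂ (A.map (algebraMap ℝ ℂ))).toReal := by
  rw [specRad, spectralRadius, ← sSup_image, ENNReal.toReal_sSup _ (by simp), Set.image_image]
  rfl

lemma specRad_nonneg {ι : Type*} [Fintype ι] [DecidableEq ι] (A : Matrix ι ι ℝ) :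
    0 ≤ specRad A :=
  specRad_eq_toReal_spectralRadius A ▸ ENNReal.toReal_nonneg

section LinftyOpNorm

attribute [local instance] Matrix.linftyOpSeminormedAddCommGroup Matrix.linftyOpNormedRing
  Matrix.linftyOpNormedAlgebra

lemma linfty_opNorm_map_eq {m n α β : Type*} [Fintype m] [Fintype n]
    [SeminormedAddCommGroup α] [SeminormedAddCommGroup β] (A : Matrix m n α) (f : α → β)
    (hf : ∀ a, ‖f a‖₊ = ‖a‖₊) :
    ‖A.map f‖ = ‖A‖ := by
  simp only [Matrix.linfty_opNorm_def, Matrix.map_apply, hf]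

lemma le_specRad_of_mul_pow_le_norm_pow {ι : Type*} [Fintype ι] [DecidableEq ι]
    {A : Matrix ι ι ℝ} {c r : ℝ} (hc : 0 < c) (hr : 0 ≤ r)
    (h : ∃ᶠ k : ℕ in atTop, c * r ^ k ≤ ‖A ^ k‖) :
    r ≤ specRad A := by
  have : CompleteSpace (Matrix ι ι ℂ) := FiniteDimensional.complete ℂ _
  have hpow (k : ℕ) : ‖A.map (algebraMap ℝ ℂ) ^ k‖ = ‖A ^ k‖ := by
    rw [← Matrix.map_pow, linfty_opNorm_map_eq _ _ (nnnorm_algebraMap' ℂ)]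
  rw [specRad_eq_toReal_spectralRadius, ← ENNReal.ofReal_le_iff_le_toReal (spectralRadius_ne_top _)]
  exact ofReal_le_spectralRadius_of_mul_pow_le_norm_pow hc hr (by simpa only [hpow] using h)

theorem le_specRad_of_le_mulVec_general {ι : Type*} [Fintype ι] [DecidableEq ι]
    (A : Matrix ι ι ℝ) (β : ℝ) (x : ι → ℝ)
    (hA : ∀ i j, 0 ≤ A i j)
    (hx : ∃ i, 0 < x i)
    (h : ∀ i, β * x i ≤ A.mulVec x i) :
    β ≤ specRad A := by
  obtain hβ | hβ := le_total β 0
  · exact hβ.trans (specRad_nonneg A)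
  obtain ⟨i, hi⟩ := hx
  have hnorm : 0 < ‖x‖ := norm_pos_iff.2 fun hx0 => hi.ne' (congrFun hx0 i)
  refine le_specRad_of_mul_pow_le_norm_pow (div_pos hi hnorm) hβ (.of_forall fun k => ?_)
  rw [div_mul_eq_mul_div, div_le_iff₀ hnorm, mul_comm]
  calc β ^ k * x i ≤ (A ^ k *ᵥ x) i := pow_smul_le_pow_mulVec_of_smul_le hA hβ h k i
    _ ≤ ‖A ^ k *ᵥ x‖ := (le_abs_self _).trans (norm_le_pi_norm (A ^ k *ᵥ x) i)
    _ ≤ ‖A ^ k‖ * ‖x‖ := Matrix.linfty_opNorm_mulVec _ _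

end LinftyOpNorm

/-- Collatz's lower bound, without any irreducibility assumption. -/
theorem le_specRad_of_le_mulVec
    {ι : Type*} [Fintype ι] [Nonempty ι] [DecidableEq ι]
    (A : Matrix ι ι ℝ) (β : ℝ) (x : ι → ℝ)
    (hA : ∀ i j, 0 ≤ A i j)
    (hx : ∀ i, 0 ≤ x i) (hx0 : x ≠ 0)
    (h : ∀ i, β * x i ≤ A.mulVec x i) :
    β ≤ specRad A :=
  le_specRad_of_le_mulVec_general A β x hA (Pi.lt_def.1 (lt_of_le_of_ne hx hx0.symm)).2 h
end
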